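/- arXiv:2209.12187 — 3 statements merged into one kernel-verified Lean document; each statement's English description precedes it below -/
import Mathlib

section
/- Let Ω ⊆ ℂ be a nonempty open connected set and let φ be a nonconstant analytic function on Ω whose image φ(Ω) meets the unit circle 𝕋 = {z ∈ ℂ : |z| = 1}. Then the set {λ ∈ Ω : φ(λ) is a root of unity}, i.e. {λ ∈ Ω : φ(λ)^n = 1 for some integer n ≥ 1}, has a limit point in Ω. -/
open Filter

theorem stmt9
    (Ω : Set ℂ) (hΩopen : IsOpen Ω) (hΩconn : IsConnected Ω)
    (φ : ℂ → ℂ) (hφa : DifferentiableOn ℂ φ Ω)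
    (hφnc : ∃ z ∈ Ω, ∃ w ∈ Ω, φ z ≠ φ w)
    (hφT : ∃ z ∈ Ω, ‖φ z‖ = 1) :
    ∃ z ∈ Ω, AccPt z (Filter.principal {lam ∈ Ω | ∃ n : ℕ, 1 ≤ n ∧ φ lam ^ n = 1}) := by
  obtain ⟨z, hz, hz1⟩ := hφT
  refine ⟨z, hz, ?_⟩
  rw [accPt_iff_nhds]
  intro U hU
  have han : AnalyticOnNhd ℂ φ Ω := hφa.analyticOnNhd hΩopen
  have hop := (han.is_constant_or_isOpen hΩconn.isPreconnected).resolve_left (by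
    rintro ⟨w, hw⟩
    obtain ⟨a, ha, b, hb, hab⟩ := hφnc
    exact hab ((hw a ha).trans (hw b hb).symm))
  have hI : IsOpen (φ '' (interior U ∩ Ω)) :=
    hop _ Set.inter_subset_right (isOpen_interior.inter hΩopen)
  set e : ℝ → ℂ := fun t => Complex.exp (2 * Real.pi * Complex.I * t) with he
  have hec : Continuous e := by fun_prop
  have hpi : (2 * Real.pi * Complex.I : ℂ) ≠ 0 := Complex.two_pi_I_ne_zero
  obtain ⟨x, hx⟩ : ∃ x : ℝ, e x = φ z := by
    refine ⟨(φ z).arg / (2 * Real.pi), ?_⟩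
    have h := Complex.norm_mul_exp_arg_mul_I (φ z)
    rw [hz1, Complex.ofReal_one, one_mul] at h
    have : (Real.pi : ℂ) ≠ 0 := by exact_mod_cast Real.pi_ne_zero
    simp only [he]
    push_cast
    rw [show (2 * Real.pi * Complex.I * ((φ z).arg / (2 * Real.pi)) : ℂ)
      = (φ z).arg * Complex.I by field_simp]
    exact h
  have hV : e ⁻¹' (φ '' (interior U ∩ Ω)) ∈ nhds x :=
    (hI.preimage hec).mem_nhds
      (by rw [Set.mem_preimage, hx]; exact ⟨z, ⟨mem_interior_iff_mem_nhds.2 hU, hz⟩, rfl⟩)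
  obtain ⟨ε, hε, hb⟩ := Metric.mem_nhds_iff.1 hV
  obtain ⟨q, hq1, hq2⟩ := exists_rat_btwn (show x < min (x + ε) (x + 1) by
    simp [hε])
  rw [lt_min_iff] at hq2
  have hqb : (q : ℝ) ∈ Metric.ball x ε := by
    rw [Metric.mem_ball, Real.dist_eq, abs_lt]; constructor <;> linarith
  obtain ⟨y, ⟨hyU, hyΩ⟩, hy⟩ := hb hqb
  refine ⟨y, ⟨interior_subset hyU, hyΩ, q.den, q.pos, ?_⟩, ?_⟩
  · rw [hy]
    simp only [he]
    rw [← Complex.exp_nat_mul, Complex.exp_eq_one_iff]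
    refine ⟨q.num, ?_⟩
    have : ((q.den : ℂ)) * (q : ℂ) = q.num := by exact_mod_cast Rat.den_mul_eq_num q
    rw [← this]
    push_cast
    ring
  · rintro rfl
    have h : e q = e x := by rw [← hy, hx]
    obtain ⟨n, hn⟩ := Complex.exp_eq_exp_iff_exists_int.1 h
    have h2 : ((q : ℝ) : ℂ) = x + n := by
      apply mul_left_cancel₀ hpi
      rw [hn]; ring
    have h3 : (q : ℝ) = x + n := by exact_mod_cast h2
    have h4 : (0 : ℝ) < n := by linarith
    have h5 : (n : ℝ) < 1 := by linarith [hq2.2]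
    have h6 : (0 : ℤ) < n := by exact_mod_cast h4
    have h7 : n < (1 : ℤ) := by exact_mod_cast h5
    omega
end

section
/- (Godefroy–Shapiro criterion, mixing part.) Let T be a continuous linear operator on a separable Banach space X over the field 𝕂 (= ℝ or ℂ). Suppose that the linear span X₀ of {x ∈ X : Tx = λx for some scalar λ ∈ 𝕂 with |λ| < 1} and the linear span Y₀ of {x ∈ X : Tx = λx for some scalar λ ∈ 𝕂 with |λ| > 1} are both dense in X. Then T is mixing, and in particular hypercyclic. -/
/-- `T` is hypercyclic if some point has dense orbit. -/
def Hypercyclic {Y : Type*} [TopologicalSpace Y] (T : Y → Y) : Prop :=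
  ∃ x : Y, Dense (Set.range fun n : ℕ => T^[n] x)

/-- `T` is topologically transitive if every pair of nonempty open sets is connected by
some iterate of `T`. -/
def TopologicallyTransitive {Y : Type*} [TopologicalSpace Y] (T : Y → Y) : Prop :=
  ∀ U V : Set Y, IsOpen U → IsOpen V → U.Nonempty → V.Nonempty →
    ∃ n : ℕ, (T^[n] '' U ∩ V).Nonempty

/-- `T` is mixing if for every pair of nonempty open sets `U, V` there is `N` such that
`T^[n] '' U` meets `V` for all `n ≥ N`. -/
def IsMixing {Y : Type*} [TopologicalSpace Y] (T : Y → Y) : Prop :=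
  ∀ U V : Set Y, IsOpen U → IsOpen V → U.Nonempty → V.Nonempty →
    ∃ N : ℕ, ∀ n ≥ N, (T^[n] '' U ∩ V).Nonempty

/-- `T` is chaotic if it is topologically transitive and has a dense set of periodic points. -/
def Chaotic {Y : Type*} [TopologicalSpace Y] (T : Y → Y) : Prop :=
  TopologicallyTransitive T ∧ Dense {x : Y | ∃ n : ℕ, 1 ≤ n ∧ T^[n] x = x}

theorem hc_of_mixing {X : Type*} [TopologicalSpace X] [BaireSpace X] [Nonempty X]
    [SecondCountableTopology X] (T : X → X) (hT : Continuous T) (h : IsMixing T) :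
    Hypercyclic T := by
  have hd : Dense (⋂ V ∈ TopologicalSpace.countableBasis X, ⋃ n : ℕ, (T^[n]) ⁻¹' V) := by
    apply dense_biInter_of_isOpen
    · intro V hV
      exact isOpen_iUnion fun n =>
        (TopologicalSpace.isOpen_of_mem_countableBasis hV).preimage (hT.iterate n)
    · exact TopologicalSpace.countable_countableBasis X
    · intro V hV
      rw [dense_iff_inter_open]
      intro U hU hUn
      obtain ⟨N, hN⟩ := h U V hU (TopologicalSpace.isOpen_of_mem_countableBasis hV) hUn
        (TopologicalSpace.nonempty_of_mem_countableBasis hV)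
      obtain ⟨_, ⟨x, hx, rfl⟩, hy⟩ := hN N le_rfl
      exact ⟨x, hx, Set.mem_iUnion.2 ⟨N, hy⟩⟩
  obtain ⟨x, hx⟩ := hd.nonempty
  refine ⟨x, ?_⟩
  rw [(TopologicalSpace.isBasis_countableBasis X).dense_iff]
  intro V hV _
  obtain ⟨n, hn⟩ := Set.mem_iUnion.1 (Set.mem_iInter₂.1 hx V hV)
  exact ⟨_, hn, n, rfl⟩

theorem stmt10
    (𝕂 : Type*) [RCLike 𝕂]
    (X : Type*) [NormedAddCommGroup X] [NormedSpace 𝕂 X] [CompleteSpace X]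
    [TopologicalSpace.SeparableSpace X]
    (T : X →L[𝕂] X)
    (hlt : Dense (Submodule.span 𝕂 {x : X | ∃ c : 𝕂, ‖c‖ < 1 ∧ T x = c • x} : Set X))
    (hgt : Dense (Submodule.span 𝕂 {x : X | ∃ c : 𝕂, 1 < ‖c‖ ∧ T x = c • x} : Set X)) :
    IsMixing ⇑T ∧ Hypercyclic ⇑T := by
  have hadd : ∀ (n : ℕ) (x y : X), T^[n] (x + y) = T^[n] x + T^[n] y :=
    fun n x y => iterate_map_add T n x y
  have hsmul : ∀ (n : ℕ) (a : 𝕂) (x : X), T^[n] (a • x) = a • T^[n] x := by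
    intro n a x
    induction n with
    | zero => rfl
    | succ n ih => rw [Function.iterate_succ_apply', ih, map_smul, Function.iterate_succ_apply']
  have heig : ∀ (c : 𝕂) (x : X), T x = c • x → ∀ n : ℕ, T^[n] x = c ^ n • x := by
    intro c x h n
    induction n with
    | zero => simp
    | succ n ih => rw [Function.iterate_succ_apply, h, hsmul, ih, smul_smul, pow_succ']
  have h0 : ∀ x ∈ Submodule.span 𝕂 {x : X | ∃ c : 𝕂, ‖c‖ < 1 ∧ T x = c • x},
      Filter.Tendsto (fun n : ℕ => T^[n] x) Filter.atTop (nhds 0) := by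
    intro x hx
    induction hx using Submodule.span_induction with
    | mem x hx =>
      obtain ⟨c, hc, h⟩ := hx
      simp_rw [heig c x h]
      simpa using (tendsto_pow_atTop_nhds_zero_of_norm_lt_one hc).smul_const x
    | zero => simp [iterate_map_zero]
    | add x y _ _ hx hy => simpa [hadd] using hx.add hy
    | smul a x _ hx => simpa [hsmul] using hx.const_smul a
  have h1 : ∀ y ∈ Submodule.span 𝕂 {x : X | ∃ c : 𝕂, 1 < ‖c‖ ∧ T x = c • x},
      ∃ u : ℕ → X, Filter.Tendsto u Filter.atTop (nhds 0) ∧ ∀ n, T^[n] (u n) = y := by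
    intro y hy
    induction hy using Submodule.span_induction with
    | mem y hy =>
      obtain ⟨c, hc, h⟩ := hy
      have hc0 : c ≠ 0 := by
        rintro rfl
        simp at hc
        linarith
      refine ⟨fun n => (c⁻¹) ^ n • y, ?_, ?_⟩
      · have : ‖c⁻¹‖ < 1 := by
          rw [norm_inv]
          exact inv_lt_one_of_one_lt₀ hc
        simpa using (tendsto_pow_atTop_nhds_zero_of_norm_lt_one this).smul_const y
      · intro n
        rw [hsmul, heig c y h, smul_smul, ← mul_pow, inv_mul_cancel₀ hc0, one_pow, one_smul]
    | zero => exact ⟨fun _ => 0, tendsto_const_nhds, fun n => iterate_map_zero T n⟩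
    | add x y _ _ hx hy =>
      obtain ⟨u, hu, hu'⟩ := hx
      obtain ⟨v, hv, hv'⟩ := hy
      exact ⟨fun n => u n + v n, by simpa using hu.add hv, fun n => by rw [hadd, hu', hv']⟩
    | smul a x _ hx =>
      obtain ⟨u, hu, hu'⟩ := hx
      exact ⟨fun n => a • u n, by simpa using hu.const_smul a, fun n => by rw [hsmul, hu']⟩
  have hmix : IsMixing ⇑T := by
    intro U V hU hV hUn hVn
    obtain ⟨x, hxU, hx⟩ := hlt.inter_open_nonempty U hU hUn
    obtain ⟨y, hyV, hy⟩ := hgt.inter_open_nonempty V hV hVn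
    obtain ⟨u, hu, hu'⟩ := h1 y hy
    have e1 : Filter.Tendsto (fun n => x + u n) Filter.atTop (nhds x) := by
      simpa using hu.const_add x
    have e2 : Filter.Tendsto (fun n => T^[n] x + y) Filter.atTop (nhds y) := by
      simpa using (h0 x hx).add_const y
    obtain ⟨N, hN⟩ := Filter.eventually_atTop.1
      ((e1.eventually (hU.mem_nhds hxU)).and (e2.eventually (hV.mem_nhds hyV)))
    refine ⟨N, fun n hn => ⟨T^[n] (x + u n), ⟨_, (hN n hn).1, rfl⟩, ?_⟩⟩
    rw [hadd, hu']
    exact (hN n hn).2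
  have : SecondCountableTopology X := UniformSpace.secondCountable_of_separable X
  exact ⟨hmix, hc_of_mixing T T.continuous hmix⟩
end

section
/- (Godefroy–Shapiro criterion, chaotic part.) Let T be a continuous linear operator on a separable complex Banach space X. Suppose that the linear span of {x ∈ X : Tx = λx for some λ ∈ ℂ with |λ| < 1}, the linear span of {x ∈ X : Tx = λx for some λ ∈ ℂ with |λ| > 1}, and the linear span of {x ∈ X : Tx = e^{απi}x for some rational number α} are all dense in X. Then T is chaotic. -/
theorem iter_smul_eig {X : Type*} [NormedAddCommGroup X] [NormedSpace ℂ X]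
    (T : X →L[ℂ] X) (x : X) (c : ℂ) (h : T x = c • x) (n : ℕ) : T^[n] x = c ^ n • x := by
  induction n with
  | zero => simp
  | succ n ih => rw [Function.iterate_succ_apply', ih, map_smul, h, smul_smul, pow_succ]

theorem iter_add {X : Type*} [NormedAddCommGroup X] [NormedSpace ℂ X]
    (T : X →L[ℂ] X) (n : ℕ) (x y : X) : T^[n] (x + y) = T^[n] x + T^[n] y := by
  induction n with
  | zero => simp
  | succ n ih => simp only [Function.iterate_succ_apply', ih, map_add]

theorem iter_smul {X : Type*} [NormedAddCommGroup X] [NormedSpace ℂ X]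
    (T : X →L[ℂ] X) (n : ℕ) (a : ℂ) (x : X) : T^[n] (a • x) = a • T^[n] x := by
  induction n with
  | zero => simp
  | succ n ih => simp only [Function.iterate_succ_apply', ih, map_smul]

theorem iter_zero {X : Type*} [NormedAddCommGroup X] [NormedSpace ℂ X]
    (T : X →L[ℂ] X) (n : ℕ) : T^[n] (0 : X) = 0 := by
  simpa using iter_smul T n 0 0

theorem tendsto_of_lt {X : Type*} [NormedAddCommGroup X] [NormedSpace ℂ X]
    (T : X →L[ℂ] X) (x : X)
    (hx : x ∈ Submodule.span ℂ {x : X | ∃ c : ℂ, ‖c‖ < 1 ∧ T x = c • x}) :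
    Filter.Tendsto (fun n : ℕ => T^[n] x) Filter.atTop (nhds 0) := by
  induction hx using Submodule.span_induction with
  | mem x h =>
    obtain ⟨c, hc, h⟩ := h
    simp only [iter_smul_eig T x c h]
    simpa using (tendsto_pow_atTop_nhds_zero_of_norm_lt_one hc).smul_const x
  | zero => simp only [iter_zero]; exact tendsto_const_nhds
  | add x y _ _ hx hy => simp only [iter_add]; simpa using hx.add hy
  | smul a x _ hx => simp only [iter_smul]; simpa using hx.const_smul a

theorem exists_of_gt {X : Type*} [NormedAddCommGroup X] [NormedSpace ℂ X]
    (T : X →L[ℂ] X) (x : X)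
    (hx : x ∈ Submodule.span ℂ {x : X | ∃ c : ℂ, 1 < ‖c‖ ∧ T x = c • x}) :
    ∃ u : ℕ → X, Filter.Tendsto u Filter.atTop (nhds 0) ∧ ∀ n, T^[n] (u n) = x := by
  induction hx using Submodule.span_induction with
  | mem x h =>
    obtain ⟨c, hc, h⟩ := h
    have hc0 : c ≠ 0 := by
      rintro rfl
      simp at hc
      linarith
    refine ⟨fun n => (c⁻¹) ^ n • x, ?_, fun n => ?_⟩
    · have : ‖c⁻¹‖ < 1 := by rw [norm_inv]; exact inv_lt_one_of_one_lt₀ hc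
      simpa using (tendsto_pow_atTop_nhds_zero_of_norm_lt_one this).smul_const x
    · rw [iter_smul, iter_smul_eig T x c h, smul_smul, ← mul_pow, inv_mul_cancel₀ hc0, one_pow,
        one_smul]
  | zero => exact ⟨fun _ => 0, tendsto_const_nhds, iter_zero T⟩
  | add x y _ _ hx hy =>
    obtain ⟨u, hu, hu'⟩ := hx
    obtain ⟨v, hv, hv'⟩ := hy
    exact ⟨fun n => u n + v n, by simpa using hu.add hv, fun n => by rw [iter_add, hu', hv']⟩
  | smul a x _ hx =>
    obtain ⟨u, hu, hu'⟩ := hx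
    exact ⟨fun n => a • u n, by simpa using hu.const_smul a, fun n => by rw [iter_smul, hu']⟩

theorem exp_pow_eq_one (α : ℚ) :
    Complex.exp ((α : ℂ) * Real.pi * Complex.I) ^ (2 * α.den) = 1 := by
  rw [← Complex.exp_nat_mul, Complex.exp_eq_one_iff]
  refine ⟨α.num, ?_⟩
  have h : (α : ℂ) * (α.den : ℂ) = α.num := by exact_mod_cast Rat.mul_den_eq_num α
  push_cast
  rw [← h]
  ring

theorem periodic_of_root {X : Type*} [NormedAddCommGroup X] [NormedSpace ℂ X]
    (T : X →L[ℂ] X) (x : X)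
    (hx : x ∈ Submodule.span ℂ
      {x : X | ∃ α : ℚ, T x = Complex.exp ((α : ℂ) * Real.pi * Complex.I) • x}) :
    ∃ n : ℕ, 1 ≤ n ∧ T^[n] x = x := by
  induction hx using Submodule.span_induction with
  | mem x h =>
    obtain ⟨α, h⟩ := h
    refine ⟨2 * α.den, by have := α.den_pos; omega, ?_⟩
    rw [iter_smul_eig T x _ h, exp_pow_eq_one, one_smul]
  | zero => exact ⟨1, le_rfl, iter_zero T 1⟩
  | add x y _ _ hx hy =>
    obtain ⟨n, hn, hx⟩ := hx
    obtain ⟨m, hm, hy⟩ := hy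
    refine ⟨n * m, Nat.mul_pos hn hm, ?_⟩
    have h1 : Function.IsPeriodicPt T (n * m) x := Function.IsPeriodicPt.mul_const hx m
    have h2 : Function.IsPeriodicPt T (n * m) y := Function.IsPeriodicPt.const_mul hy n
    rw [iter_add, h1.eq, h2.eq]
  | smul a x _ hx =>
    obtain ⟨n, hn, hx⟩ := hx
    exact ⟨n, hn, by rw [iter_smul, hx]⟩

theorem stmt11
    (X : Type*) [NormedAddCommGroup X] [NormedSpace ℂ X] [CompleteSpace X]
    [TopologicalSpace.SeparableSpace X]
    (T : X →L[ℂ] X)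
    (hlt : Dense (Submodule.span ℂ {x : X | ∃ c : ℂ, ‖c‖ < 1 ∧ T x = c • x} : Set X))
    (hgt : Dense (Submodule.span ℂ {x : X | ∃ c : ℂ, 1 < ‖c‖ ∧ T x = c • x} : Set X))
    (hroot : Dense (Submodule.span ℂ
      {x : X | ∃ α : ℚ, T x = Complex.exp ((α : ℂ) * Real.pi * Complex.I) • x} : Set X)) :
    Chaotic ⇑T := by
  refine ⟨?_, hroot.mono fun x hx => periodic_of_root T x hx⟩
  intro U V hU hV hUn hVn
  obtain ⟨x, hxU, hx⟩ := hlt.exists_mem_open hU hUn |>.imp fun _ h => h.symm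
  obtain ⟨y, hyV, hy⟩ := hgt.exists_mem_open hV hVn |>.imp fun _ h => h.symm
  obtain ⟨u, hu, hu'⟩ := exists_of_gt T y hy
  have h1 : Filter.Tendsto (fun n => x + u n) Filter.atTop (nhds x) := by
    simpa using hu.const_add x
  have h2 : Filter.Tendsto (fun n => T^[n] (x + u n)) Filter.atTop (nhds y) := by
    simp only [iter_add, hu']
    simpa using (tendsto_of_lt T x hx).add_const y
  obtain ⟨n, hn1, hn2⟩ := ((h1.eventually (hU.mem_nhds hxU)).and
    (h2.eventually (hV.mem_nhds hyV))).exists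
  exact ⟨n, _, ⟨_, hn1, rfl⟩, hn2⟩
end
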